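/- Let 0 < α_ν ≤ α_π and t > 0. Let λ : [0,t] → [0,1] be nondecreasing and absolutely continuous (i.e. λ_s = λ_0 + ∫_0^s g(v) dv for some nonnegative integrable g), and set α_s := (1−λ_s)α_ν + λ_s α_π. Define G_t(λ) := 1 − 2 ∫_0^t λ_s α_s exp( −2 ∫_s^t α_v dv ) ds. Then G_t(λ) ≥ exp(−2 α_π t), i.e. G_t is minimized over such schedules by the constant schedule λ ≡ 1, for which G_t(1) = exp(−2 α_π t). -/

import Mathlib

open MeasureTheory Real intervalIntegral

/-! Once the factor `λ_s ≤ 1` is dropped, twice the integrand of `G_t` is the derivative of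
`s ↦ exp (-2 ∫_s^t α)`, so `G_t(λ) ≥ exp (-2 ∫_0^t α)`, and `α ≤ α_π` finishes. For a schedule that
is only integrable, this derivative exists almost everywhere, and absolute continuity of
`s ↦ ∫_s^t α` justifies integrating it back. -/

theorem absolutelyContinuousOnInterval_comp_of_lipschitzOnWith
    {X Y : Type*} [PseudoMetricSpace X] [PseudoMetricSpace Y] {φ : X → Y} {f : ℝ → X}
    {K : NNReal} {a b : ℝ} (hφ : LipschitzOnWith K φ (f '' Set.uIcc a b))
    (hf : AbsolutelyContinuousOnInterval f a b) :
    AbsolutelyContinuousOnInterval (φ ∘ f) a b := by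
  rw [absolutelyContinuousOnInterval_iff] at hf ⊢
  intro ε hε
  obtain ⟨δ, hδ, hfδ⟩ := hf (ε / (K + 1)) (by positivity)
  refine ⟨δ, hδ, fun E hE hlength ↦ ?_⟩
  have hvariation := (lt_div_iff₀' (by positivity)).1 (hfδ E hE hlength)
  refine lt_of_le_of_lt ?_ hvariation
  rw [Finset.mul_sum]
  refine Finset.sum_le_sum fun i hi ↦ ?_
  obtain ⟨hleft, hright⟩ := hE.1 i hi
  calc dist ((φ ∘ f) (E.2 i).1) ((φ ∘ f) (E.2 i).2)
      ≤ K * dist (f (E.2 i).1) (f (E.2 i).2) :=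
        hφ.dist_le_mul _ (Set.mem_image_of_mem f hleft) _ (Set.mem_image_of_mem f hright)
    _ ≤ (K + 1) * dist (f (E.2 i).1) (f (E.2 i).2) := by gcongr; linarith

theorem absolutelyContinuousOnInterval_comp_of_contDiff
    {E F : Type*} [NormedAddCommGroup E] [NormedSpace ℝ E] [NormedAddCommGroup F] [NormedSpace ℝ F]
    {φ : E → F} {f : ℝ → E} {a b : ℝ} (hφ : ContDiff ℝ 1 φ)
    (hf : AbsolutelyContinuousOnInterval f a b) :
    AbsolutelyContinuousOnInterval (φ ∘ f) a b := by
  have hcompact : IsCompact (f '' Set.uIcc a b) :=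
    isCompact_uIcc.image_of_continuousOn hf.continuousOn
  obtain ⟨K, hK⟩ :=
    hφ.locallyLipschitz.locallyLipschitzOn.exists_lipschitzOnWith_of_compact hcompact
  exact absolutelyContinuousOnInterval_comp_of_lipschitzOnWith hK hf

section Primitive

variable {f : ℝ → ℝ} {a b : ℝ}

theorem absolutelyContinuousOnInterval_integral_left (hf : IntervalIntegrable f volume a b) :
    AbsolutelyContinuousOnInterval (fun s ↦ ∫ v in s..b, f v) a b := by
  simp_rw [integral_symm b]
  exact (hf.absolutelyContinuousOnInterval_intervalIntegral Set.right_mem_uIcc).fun_neg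

theorem ae_hasDerivAt_integral_left (hf : IntervalIntegrable f volume a b) :
    ∀ᵐ s, s ∈ Set.uIcc a b → HasDerivAt (fun s ↦ ∫ v in s..b, f v) (-f s) s := by
  simp_rw [integral_symm b]
  filter_upwards [hf.ae_hasDerivAt_integral] with s hs hmem
  exact (hs hmem b Set.right_mem_uIcc).fun_neg

theorem integral_mul_deriv_comp_integral_left {φ : ℝ → ℝ} (hφ : ContDiff ℝ 1 φ)
    (hf : IntervalIntegrable f volume a b) :
    ∫ s in a..b, f s * deriv φ (∫ v in s..b, f v) = φ (∫ v in a..b, f v) - φ 0 := by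
  set F : ℝ → ℝ := fun s ↦ ∫ v in s..b, f v with hF
  have hderiv : ∀ᵐ s, s ∈ Set.uIoc a b → f s * deriv φ (F s) = -deriv (φ ∘ F) s := by
    filter_upwards [ae_hasDerivAt_integral_left hf] with s hs hmem
    have hφ' : HasDerivAt φ (deriv φ (F s)) (F s) :=
      (hφ.differentiable one_ne_zero).differentiableAt.hasDerivAt
    rw [(hφ'.comp s (hs (Set.uIoc_subset_uIcc hmem))).deriv]
    ring
  calc ∫ s in a..b, f s * deriv φ (F s) = -∫ s in a..b, deriv (φ ∘ F) s := by
        rw [← intervalIntegral.integral_neg, integral_congr_ae hderiv]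
    _ = φ (F a) - φ 0 := by
        rw [(absolutelyContinuousOnInterval_comp_of_contDiff hφ
          (absolutelyContinuousOnInterval_integral_left hf)).integral_deriv_eq_sub]
        simp [hF]

theorem mul_integral_mul_exp_neg_integral (c : ℝ) (hf : IntervalIntegrable f volume a b) :
    c * ∫ s in a..b, f s * exp (-(c * ∫ v in s..b, f v)) = 1 - exp (-(c * ∫ v in a..b, f v)) := by
  have hderiv (x : ℝ) : HasDerivAt (fun x ↦ -exp (-(c * x))) (c * exp (-(c * x))) x := by
    simpa [mul_comm] using ((hasDerivAt_id x).const_mul c).fun_neg.exp.fun_neg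
  have hftc := integral_mul_deriv_comp_integral_left (φ := fun x ↦ -exp (-(c * x)))
    (by fun_prop) hf
  simp only [(hderiv _).deriv, mul_left_comm _ c, intervalIntegral.integral_const_mul] at hftc
  rw [hftc]
  simp [sub_eq_add_neg, add_comm]

theorem intervalIntegrable_mul_exp_neg_integral (c : ℝ) (hf : IntervalIntegrable f volume a b) :
    IntervalIntegrable (fun s ↦ f s * exp (-(c * ∫ v in s..b, f v))) volume a b :=
  hf.mul_continuousOn
    ((absolutelyContinuousOnInterval_integral_left hf).continuousOn.const_mul c).neg.rexp

end Primitive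

/-- The rate `α_s = (1 - λ_s) α_ν + λ_s α_π` attached to the schedule `λ`. -/
def temperedRate (anu api : ℝ) (lam : ℝ → ℝ) (s : ℝ) : ℝ :=
  (1 - lam s) * anu + lam s * api

/-- The functional `G_t(λ)`, with the rate `α` a separate argument: a schedule `λ` is evaluated at
`α = temperedRate anu api λ`, and the constant schedule `1` at `α = api`. -/
noncomputable def upperBoundFunctional (lam rate : ℝ → ℝ) (t : ℝ) : ℝ :=
  1 - 2 * ∫ s in (0 : ℝ)..t, lam s * rate s * exp (-(2 * ∫ v in s..t, rate v))

section UpperBoundFunctional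

variable {lam rate : ℝ → ℝ} {t : ℝ}

theorem upperBoundFunctional_one (hrate : IntervalIntegrable rate volume 0 t) :
    upperBoundFunctional (fun _ ↦ 1) rate t = exp (-(2 * ∫ v in (0 : ℝ)..t, rate v)) := by
  simp only [upperBoundFunctional, one_mul, mul_integral_mul_exp_neg_integral 2 hrate,
    sub_sub_cancel]

theorem upperBoundFunctional_one_const (r t : ℝ) :
    upperBoundFunctional (fun _ ↦ 1) (fun _ ↦ r) t = exp (-(2 * r * t)) := by
  rw [upperBoundFunctional_one intervalIntegrable_const, intervalIntegral.integral_const]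
  simp only [sub_zero, smul_eq_mul, mul_comm t, mul_assoc]

theorem upperBoundFunctional_one_le (ht : 0 ≤ t) (hrate : IntervalIntegrable rate volume 0 t)
    (hrate_nonneg : ∀ s ∈ Set.Icc 0 t, 0 ≤ rate s)
    (hlam : ∀ s ∈ Set.Icc 0 t, lam s ∈ Set.Icc (0 : ℝ) 1) :
    upperBoundFunctional (fun _ ↦ 1) rate t ≤ upperBoundFunctional lam rate t := by
  simp only [upperBoundFunctional, one_mul, integral_of_le ht]
  gcongr 1 - 2 * ?_
  have hIoc : ∀ᵐ s ∂volume.restrict (Set.Ioc 0 t), s ∈ Set.Icc 0 t :=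
    (ae_restrict_mem measurableSet_Ioc).mono fun _ hs ↦ Set.Ioc_subset_Icc_self hs
  refine integral_mono_of_nonneg ?_ (intervalIntegrable_mul_exp_neg_integral 2 hrate).1 ?_
  · filter_upwards [hIoc] with s hs
    exact mul_nonneg (mul_nonneg (hlam s hs).1 (hrate_nonneg s hs)) (exp_nonneg _)
  · filter_upwards [hIoc] with s hs
    exact mul_le_mul_of_nonneg_right
      (mul_le_of_le_one_left (hrate_nonneg s hs) (hlam s hs).2) (exp_nonneg _)

theorem exp_neg_le_upperBoundFunctional {r : ℝ} (ht : 0 ≤ t)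
    (hrate : IntervalIntegrable rate volume 0 t)
    (hrate_mem : ∀ s ∈ Set.Icc 0 t, rate s ∈ Set.Icc 0 r)
    (hlam : ∀ s ∈ Set.Icc 0 t, lam s ∈ Set.Icc (0 : ℝ) 1) :
    exp (-(2 * r * t)) ≤ upperBoundFunctional lam rate t := by
  have hintegral : ∫ v in (0 : ℝ)..t, rate v ≤ r * t := by
    simpa [mul_comm] using
      integral_mono_on ht hrate intervalIntegrable_const fun s hs ↦ (hrate_mem s hs).2
  calc exp (-(2 * r * t)) ≤ exp (-(2 * ∫ v in (0 : ℝ)..t, rate v)) := by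
        rw [mul_assoc]
        gcongr
    _ = upperBoundFunctional (fun _ ↦ 1) rate t := (upperBoundFunctional_one hrate).symm
    _ ≤ upperBoundFunctional lam rate t :=
        upperBoundFunctional_one_le ht hrate (fun s hs ↦ (hrate_mem s hs).1) hlam

end UpperBoundFunctional

section TemperedRate

variable {anu api : ℝ} {lam : ℝ → ℝ}

theorem temperedRate_mem_Icc {s : ℝ} (hord : anu ≤ api) (hlam : lam s ∈ Set.Icc (0 : ℝ) 1) :
    temperedRate anu api lam s ∈ Set.Icc anu api :=
  convex_Icc anu api (Set.left_mem_Icc.2 hord) (Set.right_mem_Icc.2 hord)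
    (sub_nonneg.2 hlam.2) hlam.1 (sub_add_cancel 1 (lam s))

theorem intervalIntegrable_temperedRate {a b : ℝ} (hlam : IntervalIntegrable lam volume a b) :
    IntervalIntegrable (temperedRate anu api lam) volume a b :=
  ((intervalIntegrable_const.sub hlam).mul_const anu).add (hlam.mul_const api)

end TemperedRate

theorem vanilla_langevin_optimal_when_target_better_conditioned_general
    {anu api t : ℝ} (hanu : 0 ≤ anu) (hord : anu ≤ api) (ht : 0 ≤ t) {lam : ℝ → ℝ}
    (hrange : ∀ s ∈ Set.Icc 0 t, lam s ∈ Set.Icc (0 : ℝ) 1)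
    (hlam_int : IntervalIntegrable lam volume 0 t) :
    exp (-(2 * api * t)) ≤ upperBoundFunctional lam (temperedRate anu api lam) t ∧
      upperBoundFunctional (fun _ ↦ 1) (fun _ ↦ api) t = exp (-(2 * api * t)) := by
  have hrate_mem (s : ℝ) (hs : s ∈ Set.Icc 0 t) : temperedRate anu api lam s ∈ Set.Icc 0 api :=
    Set.Icc_subset_Icc_left hanu (temperedRate_mem_Icc hord (hrange s hs))
  exact ⟨exp_neg_le_upperBoundFunctional ht (intervalIntegrable_temperedRate hlam_int)
    hrate_mem hrange, upperBoundFunctional_one_const api t⟩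

/-- For 0 < α_ν ≤ α_π and any nondecreasing, absolutely continuous
tempering schedule λ : [0,t] → [0,1], with α_s = (1−λ_s)α_ν + λ_s α_π, the functional
G_t(λ) = 1 − 2∫₀ᵗ λ_s α_s exp(−2∫ₛᵗ α_v dv) ds satisfies G_t(λ) ≥ exp(−2α_π t); i.e.
G_t is minimized by the constant schedule λ ≡ 1, for which G_t(1) = exp(−2α_π t). -/
theorem vanilla_langevin_optimal_when_target_better_conditioned
    (anu api t : ℝ) (hanu : 0 < anu) (hord : anu ≤ api) (ht : 0 < t)
    (lam g : ℝ → ℝ)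
    (hrange : ∀ s ∈ Set.Icc (0 : ℝ) t, lam s ∈ Set.Icc (0 : ℝ) 1)
    (hmono : MonotoneOn lam (Set.Icc (0 : ℝ) t))
    (hg_nonneg : ∀ s, 0 ≤ g s)
    (hg_int : IntegrableOn g (Set.Icc (0 : ℝ) t))
    (habs : ∀ s ∈ Set.Icc (0 : ℝ) t, lam s = lam 0 + ∫ v in (0 : ℝ)..s, g v) :
    Real.exp (-(2 * api * t))
      ≤ 1 - 2 * ∫ s in (0 : ℝ)..t,
          lam s * ((1 - lam s) * anu + lam s * api)
            * Real.exp (-(2 * ∫ v in s..t, ((1 - lam v) * anu + lam v * api))) ∧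
    1 - 2 * ∫ s in (0 : ℝ)..t,
        (1 : ℝ) * api * Real.exp (-(2 * ∫ v in s..t, api))
      = Real.exp (-(2 * api * t)) :=
  vanilla_langevin_optimal_when_target_better_conditioned_general hanu.le hord ht.le hrange
    (MonotoneOn.intervalIntegrable (by rwa [Set.uIcc_of_le ht.le]))
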